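/- Let T be a positive integer, v : {1,…,T} → ℝ nondecreasing, a : {1,…,T} → ℝ with a_h ≥ 0 for all h, and suppose Σ_{h=1}^{T} a_h ≥ 1. Let t̄ be the least index t with Σ_{h=1}^{t} a_h ≥ 1, and for each t define S_t = v_t·(1 − Σ_{h=1}^{t−1} a_h) + Σ_{h=1}^{t−1} v_h·a_h. Then S_{t̄} = max_{1 ≤ t ≤ T} S_t; in particular, the least real number η satisfying η ≥ S_t for all t ∈ {1,…,T} is exactly S_{t̄} = v_{t̄}·(1 − Σ_{h=1}^{t̄−1} a_h) + Σ_{h=1}^{t̄−1} v_h·a_h. -/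

import Mathlib

/-!
The increments of the right-hand sides factor as
`S (t + 1) - S t = (v (t + 1) - v t) * (1 - ∑ h ≤ t, a h)`. The first factor is nonnegative and
the second turns from positive to nonpositive at the critical index, so `S` increases up to
the critical index and decreases afterwards.
-/

section SupermodularRHS

open Finset

variable {R : Type*} [Ring R]

/-- The right-hand side of the `t`-th supermodular constraint of formulation FZ-S, for routing
values `v` and activation levels `a` indexed from `1`. The truncated subtraction `t - 1` makes
both sums empty at `t = 0`. -/
def supermodularRHS (v a : ℕ → R) (t : ℕ) : R :=
  v t * (1 - ∑ h ∈ Icc 1 (t - 1), a h) + ∑ h ∈ Icc 1 (t - 1), v h * a h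

theorem supermodularRHS_add_one_sub (v a : ℕ → R) (t : ℕ) :
    supermodularRHS v a (t + 1) - supermodularRHS v a t =
      (v (t + 1) - v t) * (1 - ∑ h ∈ Icc 1 t, a h) := by
  cases t with
  | zero => simp [supermodularRHS]
  | succ k =>
    simp only [supermodularRHS, Nat.add_sub_cancel, sum_Icc_succ_top (Nat.le_add_left 1 k)]
    noncomm_ring

variable [PartialOrder R] [IsOrderedRing R] {v a : ℕ → R} {s : Set ℕ}

theorem monotoneOn_supermodularRHS (hs : s.OrdConnected) (hv : MonotoneOn v s)
    (ha : ∀ t ∈ s, t + 1 ∈ s → ∑ h ∈ Icc 1 t, a h ≤ 1) :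
    MonotoneOn (supermodularRHS v a) s := by
  refine monotoneOn_of_le_add_one hs fun t _ ht ht' => ?_
  rw [← sub_nonneg, supermodularRHS_add_one_sub]
  exact mul_nonneg (sub_nonneg.2 (hv ht ht' t.le_succ)) (sub_nonneg.2 (ha t ht ht'))

theorem antitoneOn_supermodularRHS (hs : s.OrdConnected) (hv : MonotoneOn v s)
    (ha : ∀ t ∈ s, t + 1 ∈ s → 1 ≤ ∑ h ∈ Icc 1 t, a h) :
    AntitoneOn (supermodularRHS v a) s := by
  refine antitoneOn_of_add_one_le hs fun t _ ht ht' => ?_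
  rw [← sub_nonpos, supermodularRHS_add_one_sub]
  exact mul_nonpos_of_nonneg_of_nonpos
    (sub_nonneg.2 (hv ht ht' t.le_succ)) (sub_nonpos.2 (ha t ht ht'))

theorem isMaxOn_supermodularRHS {T tb : ℕ} (hv : MonotoneOn v (Set.Icc 1 T))
    (htb : tb ∈ Set.Icc 1 T) (hlt : ∀ t ∈ Set.Ico 1 tb, ∑ h ∈ Icc 1 t, a h ≤ 1)
    (hge : ∀ t ∈ Set.Ico tb T, 1 ≤ ∑ h ∈ Icc 1 t, a h) :
    IsMaxOn (supermodularRHS v a) (Set.Icc 1 T) tb := by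
  have hmono : MonotoneOn (supermodularRHS v a) (Set.Icc 1 tb) :=
    monotoneOn_supermodularRHS Set.ordConnected_Icc
      (hv.mono (Set.Icc_subset_Icc_right htb.2)) fun t ht ht' => hlt t ⟨ht.1, ht'.2⟩
  have hanti : AntitoneOn (supermodularRHS v a) (Set.Icc tb T) :=
    antitoneOn_supermodularRHS Set.ordConnected_Icc
      (hv.mono (Set.Icc_subset_Icc_left htb.1)) fun t ht ht' => hge t ⟨ht.1, ht'.2⟩
  exact isMaxOn_Icc_of_mono_anti hmono hanti

theorem stmt_5_general {T tb : ℕ} (hv : MonotoneOn v (Set.Icc 1 T)) (htb : tb ∈ Set.Icc 1 T)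
    (hlt : ∀ t ∈ Set.Ico 1 tb, ∑ h ∈ Icc 1 t, a h ≤ 1)
    (hge : ∀ t ∈ Set.Ico tb T, 1 ≤ ∑ h ∈ Icc 1 t, a h) :
    IsGreatest {s : R | ∃ t ∈ Icc 1 T, s = supermodularRHS v a t} (supermodularRHS v a tb) ∧
      IsLeast {η : R | ∀ t ∈ Icc 1 T, supermodularRHS v a t ≤ η} (supermodularRHS v a tb) := by
  have hmax : ∀ t ∈ Icc 1 T, supermodularRHS v a t ≤ supermodularRHS v a tb := fun t ht =>
    isMaxOn_supermodularRHS hv htb hlt hge (mem_Icc.1 ht)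
  have hmem : tb ∈ Icc 1 T := mem_Icc.2 htb
  refine ⟨⟨⟨tb, hmem, rfl⟩, ?_⟩, hmax, fun η hη => hη tb hmem⟩
  rintro _ ⟨t, ht, rfl⟩
  exact hmax t ht

end SupermodularRHS

/-- with `v` nondecreasing on `{1, …, T}`, nonnegative activation levels `a`
summing to at least `1`, `tb` the least index whose cumulative activation reaches `1`, and
`S t` the `t`-th supermodular right-hand side, `S tb` is the maximum of the values `S t`
for `1 ≤ t ≤ T`; in particular the least real `η` satisfying `η ≥ S t` for all
`t ∈ {1, …, T}` is exactly `S tb`. -/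
theorem stmt_5 (T : ℕ) (hT : 1 ≤ T) (v a : ℕ → ℝ)
    (hmono : ∀ h₁ ∈ Finset.Icc 1 T, ∀ h₂ ∈ Finset.Icc 1 T, h₁ ≤ h₂ → v h₁ ≤ v h₂)
    (ha : ∀ h ∈ Finset.Icc 1 T, 0 ≤ a h)
    (hsum : 1 ≤ ∑ h ∈ Finset.Icc 1 T, a h)
    (tb : ℕ) (htb1 : 1 ≤ tb) (htbT : tb ≤ T)
    (htbge : 1 ≤ ∑ h ∈ Finset.Icc 1 tb, a h)
    (htbmin : ∀ t, 1 ≤ t → t < tb → ∑ h ∈ Finset.Icc 1 t, a h < 1)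
    (S : ℕ → ℝ)
    (hS : ∀ t, S t = v t * (1 - ∑ h ∈ Finset.Icc 1 (t - 1), a h) +
      ∑ h ∈ Finset.Icc 1 (t - 1), v h * a h) :
    IsGreatest {s : ℝ | ∃ t ∈ Finset.Icc 1 T, s = S t} (S tb) ∧
      IsLeast {η : ℝ | ∀ t ∈ Finset.Icc 1 T, S t ≤ η}
        (v tb * (1 - ∑ h ∈ Finset.Icc 1 (tb - 1), a h) +
          ∑ h ∈ Finset.Icc 1 (tb - 1), v h * a h) := by
  obtain rfl : S = supermodularRHS v a := funext hS
  have hv : MonotoneOn v (Set.Icc 1 T) := fun h₁ hh₁ h₂ hh₂ =>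
    hmono h₁ (Finset.mem_Icc.2 hh₁) h₂ (Finset.mem_Icc.2 hh₂)
  have hge : ∀ t ∈ Set.Ico tb T, 1 ≤ ∑ h ∈ Finset.Icc 1 t, a h := fun t ht =>
    htbge.trans <| Finset.sum_le_sum_of_subset_of_nonneg (Finset.Icc_subset_Icc_right ht.1)
      fun h hh _ => ha h (Finset.Icc_subset_Icc_right ht.2.le hh)
  exact stmt_5_general hv ⟨htb1, htbT⟩ (fun t ht => (htbmin t ht.1 ht.2).le) hge
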